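/- arXiv:math/0506278 — 3 statements merged into one kernel-verified Lean document; each statement's English description precedes it below -/
import Mathlib

section
/- Let q be a real number with 0 < q < 1 and let n ≥ 1 be an integer. Then the q-Genocchi numbers are expressed through the q-Bernoulli numbers by G_{n,q} = [2]_q·B_{n,q} − 2·[2]_q^n·B_{n,q²}. -/
open Finset Filter

/-- The q-analogue `[x]_q = (1 - q^x)/(1 - q)` with real exponent. -/
noncomputable def qb (q x : ℝ) : ℝ := (1 - q ^ x) / (1 - q)

/-- q-Euler polynomial `E_{n,q}(x) = [2]_q ∑_{k≥0} (-1)^k q^k [k+x]_q^n`. -/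
noncomputable def qEulerPoly (q : ℝ) (n : ℕ) (x : ℝ) : ℝ :=
  (1 + q) * ∑' k : ℕ, (-1 : ℝ) ^ k * q ^ k * qb q ((k : ℝ) + x) ^ n

/-- q-Euler number `E_{n,q} = E_{n,q}(0)`. -/
noncomputable def qEuler (q : ℝ) (n : ℕ) : ℝ := qEulerPoly q n 0

/-- q-Genocchi polynomial `G_{n,q}(x) = n[2]_q ∑_{k≥0} (-1)^k q^{k+x} [k+x]_q^{n-1}`,
with `G_{0,q}(x) = 0` (via the factor `n`). -/
noncomputable def qGenocchiPoly (q : ℝ) (n : ℕ) (x : ℝ) : ℝ :=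
  (n : ℝ) * (1 + q) * ∑' k : ℕ, (-1 : ℝ) ^ k * q ^ ((k : ℝ) + x) * qb q ((k : ℝ) + x) ^ (n - 1)

/-- q-Genocchi number `G_{n,q} = G_{n,q}(0)`. -/
noncomputable def qGenocchi (q : ℝ) (n : ℕ) : ℝ := qGenocchiPoly q n 0

/-- q-Bernoulli number `B_{n,q} = -n ∑_{k≥0} q^k [k]_q^{n-1}` (for `n ≥ 1`). -/
noncomputable def qBernoulli (q : ℝ) (n : ℕ) : ℝ :=
  -(n : ℝ) * ∑' k : ℕ, q ^ k * qb q (k : ℝ) ^ (n - 1)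

/-! Splitting an absolutely convergent series by the parity of the index gives
`∑ (-1)^k a_k = 2 ∑ a_{2k} - ∑ a_k`. For `a_k = q^k [k]_q^{n-1}` the even-indexed terms form, up to
a power of `[2]_q`, the series of base `q²`, because `[2k]_q = [2]_q [k]_{q²}`. -/

theorem tsum_neg_one_pow_mul {R : Type*} [Ring R] [UniformSpace R] [IsUniformAddGroup R]
    [CompleteSpace R] [T2Space R] {f : ℕ → R} (hf : Summable f) :
    ∑' k, (-1) ^ k * f k = 2 * ∑' k, f (2 * k) - ∑' k, f k := by
  have even_summable : Summable fun k => f (2 * k) :=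
    hf.comp_injective fun _ _ h => by simpa using h
  have odd_summable : Summable fun k => f (2 * k + 1) :=
    hf.comp_injective fun _ _ h => by simpa using h
  have even_sign (k : ℕ) : (-1) ^ (2 * k) * f (2 * k) = f (2 * k) := by simp
  have odd_sign (k : ℕ) : (-1) ^ (2 * k + 1) * f (2 * k + 1) = -f (2 * k + 1) := by
    simp [pow_succ]
  calc
    ∑' k, (-1) ^ k * f k = ∑' k, f (2 * k) - ∑' k, f (2 * k + 1) := by
      rw [← tsum_even_add_odd (by simpa only [even_sign] using even_summable)
        (by simpa only [odd_sign] using odd_summable.neg)]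
      simp only [even_sign, odd_sign, tsum_neg, sub_eq_add_neg]
    _ = 2 * ∑' k, f (2 * k) - ∑' k, f k := by
      rw [← tsum_even_add_odd even_summable odd_summable, two_mul]
      abel

section

variable {q : ℝ}

theorem qb_natCast (q : ℝ) (k : ℕ) : qb q k = (1 - q ^ k) / (1 - q) := by
  rw [qb, Real.rpow_natCast]

theorem qb_natCast_two_mul (hq : 1 + q ≠ 0) (k : ℕ) :
    qb q (2 * k : ℕ) = (1 + q) * qb (q ^ 2) k := by
  have factor : 1 - q ^ 2 = (1 + q) * (1 - q) := by ring
  rw [qb_natCast, qb_natCast, factor, ← mul_div_assoc, mul_div_mul_left _ _ hq, pow_mul]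

theorem abs_qb_natCast_le (hq : |q| ≤ 1) (k : ℕ) : |qb q k| ≤ 2 / |1 - q| := by
  have pow_le : |q ^ k| ≤ 1 := by
    rw [abs_pow]
    exact pow_le_one₀ (abs_nonneg q) hq
  rw [qb_natCast, abs_div]
  gcongr
  calc
    |1 - q ^ k| ≤ |1| + |q ^ k| := abs_sub _ _
    _ ≤ 2 := by rw [abs_one]; linarith

/-- The summand `q^k [k]_q^m` common to the series of `B_{m+1,q}` and, up to sign, `G_{m+1,q}`. -/
noncomputable def qBernoulliTerm (q : ℝ) (m k : ℕ) : ℝ := q ^ k * qb q k ^ m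

theorem summable_qBernoulliTerm (hq : |q| < 1) (m : ℕ) : Summable (qBernoulliTerm q m) := by
  have majorant : Summable fun k : ℕ => |q| ^ k * (2 / |1 - q|) ^ m :=
    (summable_geometric_of_lt_one (abs_nonneg q) hq).mul_right _
  refine majorant.of_norm_bounded fun k => ?_
  rw [qBernoulliTerm, Real.norm_eq_abs, abs_mul, abs_pow, abs_pow]
  gcongr
  exact abs_qb_natCast_le hq.le k

theorem qBernoulliTerm_two_mul (hq : 1 + q ≠ 0) (m k : ℕ) :
    qBernoulliTerm q m (2 * k) = (1 + q) ^ m * qBernoulliTerm (q ^ 2) m k := by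
  rw [qBernoulliTerm, qBernoulliTerm, qb_natCast_two_mul hq, mul_pow, pow_mul, mul_left_comm]

theorem qBernoulli_eq_tsum (q : ℝ) (n : ℕ) :
    qBernoulli q n = -n * ∑' k, qBernoulliTerm q (n - 1) k := rfl

theorem qGenocchi_eq_tsum (q : ℝ) (n : ℕ) :
    qGenocchi q n = n * (1 + q) * ∑' k, (-1) ^ k * qBernoulliTerm q (n - 1) k := by
  simp only [qGenocchi, qGenocchiPoly, qBernoulliTerm, add_zero, Real.rpow_natCast, mul_assoc]

theorem tsum_neg_one_pow_mul_qBernoulliTerm (hq : |q| < 1) (m : ℕ) :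
    ∑' k, (-1) ^ k * qBernoulliTerm q m k =
      2 * (1 + q) ^ m * ∑' k, qBernoulliTerm (q ^ 2) m k - ∑' k, qBernoulliTerm q m k := by
  have one_add_ne_zero : 1 + q ≠ 0 := by linarith [neg_lt_of_abs_lt hq]
  rw [tsum_neg_one_pow_mul (summable_qBernoulliTerm hq m)]
  simp only [qBernoulliTerm_two_mul one_add_ne_zero, tsum_mul_left, mul_assoc]

end

-- For negative `q` the real powers are harmless: only exponents `k ∈ ℕ` occur in the series.
theorem q_genocchi_eq_q_bernoulli_combination_general {q : ℝ} (hq : |q| < 1)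
    {n : ℕ} (hn : 1 ≤ n) :
    qGenocchi q n = (1 + q) * qBernoulli q n - 2 * (1 + q) ^ n * qBernoulli (q ^ 2) n := by
  have pow_split : (1 + q) ^ n = (1 + q) * (1 + q) ^ (n - 1) :=
    (mul_pow_sub_one (by lia) (1 + q)).symm
  rw [qGenocchi_eq_tsum, tsum_neg_one_pow_mul_qBernoulliTerm hq, qBernoulli_eq_tsum,
    qBernoulli_eq_tsum, pow_split]
  ring

theorem q_genocchi_eq_q_bernoulli_combination (q : ℝ) (hq0 : 0 < q) (hq1 : q < 1)
    (n : ℕ) (hn : 1 ≤ n) :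
    qGenocchi q n = (1 + q) * qBernoulli q n - 2 * (1 + q) ^ n * qBernoulli (q ^ 2) n := by
  exact q_genocchi_eq_q_bernoulli_combination_general (abs_lt.mpr ⟨by linarith, hq1⟩) hn
end

section
/- Let n ≥ 1 be an integer. Then, as the real parameter q tends to 1 from below, the q-Genocchi numbers tend to the classical Genocchi numbers: lim_{q→1⁻} G_{n,q} = 2·(1 − 2^n)·bernoulli(n). -/
open Finset Filter

/-!
The `q`-Genocchi numbers satisfy the umbral recurrence `(q G + 1)^n + G_n = [2]_q δ_{n,1}`: expand
`[k + 1]_q = 1 + q [k]_q` binomially and telescope the alternating sum. At `q = 1` it becomes the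
recurrence of the classical Genocchi numbers, which is the identity `G(t) (e^t + 1) = 2 t`. Since
the coefficient `1 + q^n` of `G_n` tends to `2 ≠ 0`, the recurrence can be solved for `G_n`, and the
limit passes through it by induction on `n`.
-/

section GeneratingFunctions

open PowerSeries

/-- The exponential generating function `∑ aₙ Xⁿ / n!` of a sequence in a `ℚ`-algebra; it
turns binomial transforms into multiplication by `exp`. -/
noncomputable def egf {A : Type*} [Ring A] [Algebra ℚ A] (a : ℕ → A) : PowerSeries A :=
  mk fun n => (n.factorial : ℚ)⁻¹ • a n

section Ring

variable {A : Type*} [Ring A] [Algebra ℚ A]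

lemma coeff_egf (a : ℕ → A) (n : ℕ) : coeff n (egf a) = (n.factorial : ℚ)⁻¹ • a n :=
  coeff_mk n _

lemma egf_injective : Function.Injective (egf : (ℕ → A) → PowerSeries A) := by
  intro a b h
  funext n
  have hn : (n.factorial : ℚ)⁻¹ ≠ 0 := by positivity
  have hcoeff := congrArg (coeff n) h
  rw [coeff_egf, coeff_egf] at hcoeff
  exact smul_right_injective A hn hcoeff

lemma egf_add (a b : ℕ → A) : egf (a + b) = egf a + egf b := by
  ext n
  simp only [map_add, coeff_egf, Pi.add_apply, smul_add]

lemma egf_mul_exp (a : ℕ → A) :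
    egf a * exp A = egf fun n => ∑ k ∈ range (n + 1), n.choose k • a k := by
  ext n
  rw [coeff_mul, Finset.Nat.sum_antidiagonal_eq_sum_range_succ_mk, coeff_egf, Finset.smul_sum]
  refine Finset.sum_congr rfl fun k hk => ?_
  have hkn : k ≤ n := Nat.lt_succ_iff.mp (mem_range.mp hk)
  have hchoose : (n.factorial : ℚ)⁻¹ * n.choose k
      = 1 / (n - k).factorial * (k.factorial : ℚ)⁻¹ := by
    rw [Nat.cast_choose ℚ hkn]
    field_simp
  rw [coeff_egf, coeff_exp, ← Algebra.commutes, ← Algebra.smul_def, smul_smul,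
    ← Nat.cast_smul_eq_nsmul ℚ, smul_smul, hchoose]

end Ring

/-- The classical Genocchi number `G_n`, with generating function `2 t / (e^t + 1)`, encoded through
its expression by Bernoulli numbers. -/
def genocchi (n : ℕ) : ℚ := 2 * (1 - 2 ^ n) * bernoulli n

lemma egf_genocchi :
    egf genocchi = 2 * (bernoulliPowerSeries ℚ - rescale 2 (bernoulliPowerSeries ℚ)) := by
  ext n
  rw [show (2 : PowerSeries ℚ) = C 2 from rfl, coeff_C_mul, map_sub, coeff_rescale, coeff_egf,
    bernoulliPowerSeries, coeff_mk, genocchi, smul_eq_mul, Algebra.algebraMap_self,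
    RingHom.id_apply]
  ring

lemma rescale_two_bernoulliPowerSeries_mul_exp_sq_sub_one :
    rescale 2 (bernoulliPowerSeries ℚ) * (exp ℚ ^ 2 - 1) = 2 * X := by
  rw [exp_pow_eq_rescale_exp, Nat.cast_ofNat]
  have h := congrArg (rescale (2 : ℚ)) (bernoulliPowerSeries_mul_exp_sub_one ℚ)
  rwa [map_mul, map_sub, map_one, rescale_X] at h

lemma egf_genocchi_mul_exp_add_one : egf genocchi * (exp ℚ + 1) = 2 * X := by
  have hB := bernoulliPowerSeries_mul_exp_sub_one ℚ
  have hB₂ := rescale_two_bernoulliPowerSeries_mul_exp_sq_sub_one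
  have hexp : exp ℚ - 1 ≠ 0 := right_ne_zero_of_mul (hB.trans_ne X_ne_zero)
  apply mul_right_cancel₀ hexp
  rw [egf_genocchi]
  linear_combination 2 * (exp ℚ + 1) * hB - 2 * hB₂

lemma sum_choose_mul_genocchi_add_genocchi (n : ℕ) :
    ∑ k ∈ range (n + 1), n.choose k * genocchi k + genocchi n = if n = 1 then 2 else 0 := by
  have hX : egf (fun n => if n = 1 then (2 : ℚ) else 0) = 2 * X := by
    ext n
    rw [show (2 : PowerSeries ℚ) = C 2 from rfl, coeff_egf, coeff_C_mul, coeff_X]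
    split_ifs with hn <;> simp [hn]
  have h := egf_genocchi_mul_exp_add_one
  rw [mul_add, mul_one, egf_mul_exp, ← egf_add, ← hX] at h
  simpa only [nsmul_eq_mul, Pi.add_apply] using congrFun (egf_injective h) n

end GeneratingFunctions

/-- The derivative of the binomial expansion of `(a * c + b) ^ n` with respect to `c`. -/
lemma sum_choose_mul_pow_mul_natCast_mul_pow {R : Type*} [CommSemiring R] (a b c : R) (n : ℕ) :
    ∑ k ∈ range (n + 1), n.choose k * a ^ k * b ^ (n - k) * (k * c ^ (k - 1))
      = n * a * (a * c + b) ^ (n - 1) := by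
  cases n with
  | zero => simp
  | succ m =>
    rw [Finset.sum_range_succ', Nat.cast_zero, zero_mul, mul_zero, add_zero, Nat.add_sub_cancel,
      add_pow, Finset.mul_sum]
    refine Finset.sum_congr rfl fun k _ => ?_
    have hchoose : ((m + 1 : ℕ) * m.choose k : R) = (m + 1).choose (k + 1) * (k + 1 : ℕ) := by
      rw [← Nat.cast_mul, ← Nat.cast_mul, Nat.add_one_mul_choose_eq]
    rw [Nat.add_sub_add_right, Nat.add_sub_cancel, mul_pow]
    calc _ = (m + 1).choose (k + 1) * (k + 1 : ℕ) * (a ^ (k + 1) * b ^ (m - k) * c ^ k) := by ring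
      _ = _ := by rw [← hchoose]; ring

section QGenocchi

variable {q : ℝ}

lemma qb_zero (q : ℝ) : qb q 0 = 0 := by
  rw [qb, Real.rpow_zero, sub_self, zero_div]

lemma qb_one (hq : q ≠ 1) : qb q 1 = 1 := by
  rw [qb, Real.rpow_one, div_self (sub_ne_zero.mpr hq.symm)]

lemma qb_add (hq : 0 < q) (x y : ℝ) : qb q (x + y) = q ^ y * qb q x + qb q y := by
  rw [qb, qb, qb, Real.rpow_add hq]
  ring

lemma abs_qb_natCast_add_le (hq : q ∈ Set.Ioo 0 1) (k : ℕ) (x : ℝ) :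
    |qb q (k + x)| ≤ (1 + q ^ x) / (1 - q) := by
  have hpow : q ^ (k + x) ≤ q ^ x :=
    Real.rpow_le_rpow_of_exponent_ge hq.1 hq.2.le (le_add_of_nonneg_left k.cast_nonneg)
  have hpos : 0 < q ^ (k + x) := Real.rpow_pos_of_pos hq.1 _
  have hden : 0 < 1 - q := sub_pos.mpr hq.2
  rw [qb, abs_div, abs_of_pos hden]
  gcongr
  exact abs_le.mpr ⟨by linarith, by linarith⟩

lemma summable_neg_one_pow_mul_rpow_mul_qb_pow (hq : q ∈ Set.Ioo 0 1) (x : ℝ) (n : ℕ) :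
    Summable fun k : ℕ => (-1 : ℝ) ^ k * q ^ ((k : ℝ) + x) * qb q (k + x) ^ n := by
  refine Summable.of_norm_bounded
    ((summable_geometric_of_lt_one hq.1.le hq.2).mul_right
      (q ^ x * ((1 + q ^ x) / (1 - q)) ^ n)) fun k => ?_
  rw [norm_mul, norm_mul, norm_pow, norm_neg, norm_one, one_pow, one_mul, norm_pow,
    Real.norm_of_nonneg (Real.rpow_nonneg hq.1.le _), Real.norm_eq_abs, ← mul_assoc,
    Real.rpow_add hq.1, Real.rpow_natCast]
  have := Real.rpow_nonneg hq.1.le x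
  have := hq.1.le
  gcongr
  exact abs_qb_natCast_add_le hq k x

lemma hasSum_qGenocchiPoly (hq : q ∈ Set.Ioo 0 1) (n : ℕ) (x : ℝ) :
    HasSum (fun k : ℕ => n * (1 + q) * ((-1) ^ k * q ^ (k + x) * qb q (k + x) ^ (n - 1)))
      (qGenocchiPoly q n x) :=
  (summable_neg_one_pow_mul_rpow_mul_qb_pow hq x (n - 1)).hasSum.mul_left _

lemma qGenocchiPoly_add (hq : q ∈ Set.Ioo 0 1) (n : ℕ) (x y : ℝ) :
    qGenocchiPoly q n (x + y)
      = ∑ j ∈ range (n + 1), n.choose j * (q ^ y) ^ j * qb q y ^ (n - j) * qGenocchiPoly q j x := by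
  have hterm (k : ℕ) :
      ∑ j ∈ range (n + 1), n.choose j * (q ^ y) ^ j * qb q y ^ (n - j)
          * (j * (1 + q) * ((-1) ^ k * q ^ (k + x) * qb q (k + x) ^ (j - 1)))
        = n * (1 + q) * ((-1) ^ k * q ^ (k + (x + y)) * qb q (k + (x + y)) ^ (n - 1)) := by
    calc _ = (1 + q) * ((-1) ^ k * q ^ (k + x)) * ∑ j ∈ range (n + 1),
          n.choose j * (q ^ y) ^ j * qb q y ^ (n - j) * (j * qb q (k + x) ^ (j - 1)) := by
            rw [Finset.mul_sum]
            exact Finset.sum_congr rfl fun j _ => by ring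
      _ = (1 + q) * ((-1) ^ k * q ^ (k + x))
          * (n * q ^ y * (q ^ y * qb q (k + x) + qb q y) ^ (n - 1)) := by
            rw [sum_choose_mul_pow_mul_natCast_mul_pow]
      _ = _ := by
            rw [← add_assoc, qb_add hq.1 (k + x) y, Real.rpow_add hq.1 (k + x) y]
            ring
  have hsum := hasSum_sum fun j (_ : j ∈ range (n + 1)) =>
    (hasSum_qGenocchiPoly hq j x).mul_left (n.choose j * (q ^ y) ^ j * qb q y ^ (n - j))
  simp only [hterm] at hsum
  exact (hasSum_qGenocchiPoly hq n (x + y)).unique hsum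

lemma qGenocchiPoly_add_one_add_qGenocchiPoly (hq : q ∈ Set.Ioo 0 1) (n : ℕ) (x : ℝ) :
    qGenocchiPoly q n (x + 1) + qGenocchiPoly q n x
      = n * (1 + q) * (q ^ x * qb q x ^ (n - 1)) := by
  have hshift := (hasSum_nat_add_iff' 1).mpr (hasSum_qGenocchiPoly hq n x)
  have hneg := (hasSum_qGenocchiPoly hq n (x + 1)).neg
  have hterm (k : ℕ) : ((k + 1 : ℕ) : ℝ) + x = k + (x + 1) := by
    push_cast
    ring
  simp only [hterm, pow_succ, mul_neg, neg_mul, mul_one, Finset.sum_range_one, Nat.cast_zero,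
    pow_zero, one_mul, zero_add] at hshift
  linear_combination -(hneg.unique hshift)

lemma sum_choose_mul_qGenocchi_add_qGenocchi (hq : q ∈ Set.Ioo 0 1) (n : ℕ) :
    ∑ k ∈ range (n + 1), n.choose k * q ^ k * qGenocchi q k + qGenocchi q n
      = if n = 1 then 1 + q else 0 := by
  have hadd := qGenocchiPoly_add hq n 0 1
  simp only [Real.rpow_one, qb_one hq.2.ne, one_pow, mul_one] at hadd
  simp only [qGenocchi]
  rw [← hadd, qGenocchiPoly_add_one_add_qGenocchiPoly hq, Real.rpow_zero, one_mul, qb_zero]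
  rcases n with _ | _ | n <;> simp

end QGenocchi

lemma tendsto_of_sum_choose_mul_pow_mul_add_eq {ι K : Type*} [Field K] [NeZero (2 : K)]
    [TopologicalSpace K] [IsTopologicalDivisionRing K] [T1Space K] {l : Filter ι} {q : ι → K}
    {a c : ℕ → ι → K} {A C : ℕ → K} (hq : Tendsto q l (nhds 1))
    (hc : ∀ n, Tendsto (c n) l (nhds (C n)))
    (ha : ∀ n, ∀ᶠ i in l, ∑ k ∈ range (n + 1), n.choose k * q i ^ k * a k i + a n i = c n i)
    (hA : ∀ n, ∑ k ∈ range (n + 1), n.choose k * A k + A n = C n) (n : ℕ) :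
    Tendsto (a n) l (nhds (A n)) := by
  induction n using Nat.strong_induction_on with
  | _ n ih =>
    have hden : Tendsto (fun i => 1 + q i ^ n) l (nhds 2) := by
      simpa only [one_pow, one_add_one_eq_two] using (hq.pow n).const_add 1
    have hsum : Tendsto (fun i => ∑ k ∈ range n, n.choose k * q i ^ k * a k i) l
        (nhds (∑ k ∈ range n, n.choose k * A k)) := by
      refine tendsto_finsetSum _ fun k hk => ?_
      simpa only [one_pow, mul_one] using
        ((hq.pow k).const_mul (n.choose k : K)).mul (ih k (mem_range.mp hk))
    have hlim : (C n - ∑ k ∈ range n, n.choose k * A k) / 2 = A n := by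
      rw [div_eq_iff two_ne_zero, ← hA n, Finset.sum_range_succ, Nat.choose_self]
      ring
    rw [← hlim]
    refine (((hc n).sub hsum).div hden two_ne_zero).congr' ?_
    filter_upwards [ha n, hden.eventually_ne two_ne_zero] with i hi hne
    rw [Pi.div_apply, div_eq_iff hne, ← hi, Finset.sum_range_succ, Nat.choose_self]
    ring

theorem q_genocchi_tendsto_genocchi (n : ℕ) (hn : 1 ≤ n) :
    Filter.Tendsto (fun q : ℝ => qGenocchi q n) (nhdsWithin 1 (Set.Ioo 0 1))
      (nhds ((2 * (1 - 2 ^ n) * bernoulli n : ℚ) : ℝ)) := by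
  have hq : Tendsto (fun q : ℝ => q) (nhdsWithin 1 (Set.Ioo 0 1)) (nhds 1) :=
    tendsto_nhdsWithin_of_tendsto_nhds tendsto_id
  refine tendsto_of_sum_choose_mul_pow_mul_add_eq (a := fun n q => qGenocchi q n)
    (c := fun n q => if n = 1 then 1 + q else 0) (A := fun n => (genocchi n : ℝ))
    (C := fun n => if n = 1 then 2 else 0) hq (fun n => ?_) (fun n => ?_) (fun n => ?_) n
  · split_ifs
    · simpa only [one_add_one_eq_two] using hq.const_add 1
    · exact tendsto_const_nhds
  · filter_upwards [self_mem_nhdsWithin] with q hq01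
    exact sum_choose_mul_qGenocchi_add_qGenocchi hq01 n
  · have h := congrArg (Rat.cast : ℚ → ℝ) (sum_choose_mul_genocchi_add_genocchi n)
    push_cast [apply_ite (Rat.cast : ℚ → ℝ)] at h
    exact h
end

section
/- Let n ≥ 0 be an integer. Then, as the real parameter q tends to 1 from below, the q-Euler numbers tend to the classical Euler numbers: lim_{q→1⁻} E_{n,q} = 2·(1 − 2^{n+1})·bernoulli(n+1)/(n+1). -/
open Finset Filter

/-!
Splitting off the first term of the series gives `q E_{n,q}(x+1) + E_{n,q}(x) = [2]_q [x]_q ^ n`,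
while `[x+1]_q = q [x]_q + 1` gives `E_{n,q}(x+1) = ∑ j ≤ n, (n choose j) q ^ j E_{j,q}(x)`.
Together they express `E_{n,q}(x)` through `[x]_q` and the `E_{j,q}(x)` with `j < n`, by a
recurrence whose coefficients are continuous at `q = 1`. Its limit there is the recurrence of the
classical Euler polynomials: these form an Appell sequence, hence obey the binomial addition
formula, and satisfy `E_n(x+1) + E_n(x) = 2 x ^ n`. Strong induction on `n` then gives
`E_{n,q}(x) → E_n(x)`.
-/

open scoped Topology

section Appell

variable {𝕜 : Type*} [RCLike 𝕜] {f : ℕ → 𝕜 → 𝕜}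

/-- Appell sequences of functions: `f n` has derivative `n * f (n - 1)`. For `n = 0` the factor `n`
makes the truncated index `n - 1` harmless, and the condition says that `f 0` is constant. -/
def IsAppell (f : ℕ → 𝕜 → 𝕜) : Prop :=
  ∀ n x, HasDerivAt (f n) (n * f (n - 1) x) x

lemma hasDerivAt_sum_choose_mul_pow (a : ℕ → 𝕜) (n : ℕ) (y : 𝕜) :
    HasDerivAt (fun y ↦ ∑ j ∈ range (n + 2), ((n + 1).choose j : 𝕜) * a j * y ^ (n + 1 - j))
      ((n + 1) * ∑ j ∈ range (n + 1), (n.choose j : 𝕜) * a j * y ^ (n - j)) y := by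
  have hterm (j : ℕ) : HasDerivAt (fun y ↦ ((n + 1).choose j : 𝕜) * a j * y ^ (n + 1 - j))
      ((n + 1).choose j * a j * ((n + 1 - j : ℕ) * y ^ (n + 1 - j - 1))) y :=
    (hasDerivAt_pow _ y).const_mul _
  refine (HasDerivAt.fun_sum fun j _ ↦ hterm j).congr_deriv ?_
  rw [sum_range_succ, mul_sum]
  simp only [Nat.sub_self, Nat.cast_zero, zero_mul, mul_zero, add_zero]
  refine sum_congr rfl fun j _ ↦ ?_
  have hchoose : (n.choose j : 𝕜) * (n + 1) = (n + 1).choose j * (n + 1 - j : ℕ) :=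
    mod_cast Nat.choose_mul_succ_eq n j
  rw [Nat.sub_right_comm, Nat.add_sub_cancel]
  linear_combination -(a j * y ^ (n - j)) * hchoose

lemma IsAppell.apply_add (hf : IsAppell f) (n : ℕ) (x y : 𝕜) :
    f n (x + y) = ∑ j ∈ range (n + 1), (n.choose j : 𝕜) * f j x * y ^ (n - j) := by
  induction n generalizing y with
  | zero =>
    have hconst := is_const_of_deriv_eq_zero (fun z ↦ (hf 0 z).differentiableAt)
      (fun z ↦ by simpa using (hf 0 z).deriv) (x + y) x
    simpa using hconst
  | succ n ih =>
    let g (y : 𝕜) : 𝕜 :=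
      f (n + 1) (x + y) - ∑ j ∈ range (n + 2), ((n + 1).choose j : 𝕜) * f j x * y ^ (n + 1 - j)
    have hg (y : 𝕜) : HasDerivAt g 0 y := by
      refine (((hf (n + 1) (x + y)).comp_const_add x y).sub
        (hasDerivAt_sum_choose_mul_pow (f · x) n y)).congr_deriv ?_
      rw [Nat.add_sub_cancel, ih, Nat.cast_succ, sub_self]
    have hg_zero : g 0 = 0 := by
      have hsum : ∑ j ∈ range (n + 1), ((n + 1).choose j : 𝕜) * f j x * 0 ^ (n + 1 - j) = 0 :=
        sum_eq_zero fun j hj ↦ by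
          rw [zero_pow (Nat.sub_ne_zero_of_lt (mem_range.mp hj)), mul_zero]
      simp [g, sum_range_succ _ (n + 1), hsum]
    have hconst := is_const_of_deriv_eq_zero (fun z ↦ (hg z).differentiableAt)
      (fun z ↦ (hg z).deriv) y 0
    exact sub_eq_zero.mp (hconst.trans hg_zero)

end Appell

lemma bernoulliFun_add_one (n : ℕ) (x : ℝ) :
    bernoulliFun n (x + 1) = bernoulliFun n x + n * x ^ (n - 1) := by
  have h := congrArg (Polynomial.aeval x) (Polynomial.bernoulli_comp_one_add_X n)
  simpa [bernoulliFun, Polynomial.aeval_comp, Polynomial.eval_map_algebraMap, add_comm] using h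

lemma two_pow_mul_bernoulliFun_div_two_add (n : ℕ) (x : ℝ) :
    2 ^ n * (bernoulliFun n (x / 2) + bernoulliFun n ((x + 1) / 2)) = 2 * bernoulliFun n x := by
  have h := bernoulliFun_mul n two_ne_zero (x / 2)
  rw [sum_range_succ, sum_range_one] at h
  push_cast at h
  rw [mul_div_cancel₀ x two_ne_zero, zero_div, add_zero, ← add_div] at h
  rw [h]
  ring

/-- The Euler polynomial `E_n` as a real function, defined through the Bernoulli polynomials by
`E_n(x) = 2 / (n + 1) * (B_{n+1}(x) - 2^{n+1} * B_{n+1}(x / 2))`. -/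
noncomputable def eulerFun (n : ℕ) (x : ℝ) : ℝ :=
  2 / (n + 1) * (bernoulliFun (n + 1) x - 2 ^ (n + 1) * bernoulliFun (n + 1) (x / 2))

lemma eulerFun_eval_zero (n : ℕ) :
    eulerFun n 0 = 2 * (1 - 2 ^ (n + 1)) * bernoulli (n + 1) / (n + 1) := by
  rw [eulerFun, zero_div, bernoulliFun_eval_zero]
  ring

lemma isAppell_eulerFun : IsAppell eulerFun := by
  intro n x
  have hB (y : ℝ) : HasDerivAt (bernoulliFun (n + 1)) ((n + 1) * bernoulliFun n y) y := by
    simpa using hasDerivAt_bernoulliFun (n + 1) y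
  have hB_half := (hB (x / 2)).comp x ((hasDerivAt_id x).div_const 2)
  refine (((hB x).sub (hB_half.const_mul (2 ^ (n + 1)))).const_mul (2 / (n + 1 : ℝ))).congr_deriv ?_
  cases n with
  | zero => simp [bernoulliFun_zero]
  | succ n =>
    rw [eulerFun, Nat.add_sub_cancel]
    push_cast
    field_simp
    ring

lemma eulerFun_add_one_add_eulerFun (n : ℕ) (x : ℝ) :
    eulerFun n (x + 1) + eulerFun n x = 2 * x ^ n := by
  have hshift := bernoulliFun_add_one (n + 1) x
  have hhalf := two_pow_mul_bernoulliFun_div_two_add (n + 1) x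
  rw [Nat.add_sub_cancel] at hshift
  push_cast at hshift
  rw [eulerFun, eulerFun]
  field_simp
  linear_combination hshift - hhalf

lemma two_mul_eulerFun (n : ℕ) (x : ℝ) :
    2 * eulerFun n x = 2 * x ^ n - ∑ j ∈ range n, (n.choose j : ℝ) * eulerFun j x := by
  have hadd := isAppell_eulerFun.apply_add n x 1
  simp only [one_pow, mul_one] at hadd
  rw [sum_range_succ, Nat.choose_self, Nat.cast_one, one_mul] at hadd
  linear_combination eulerFun_add_one_add_eulerFun n x - hadd

lemma qb_add_one {q : ℝ} (hq₀ : q ≠ 0) (hq₁ : q ≠ 1) (x : ℝ) :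
    qb q (x + 1) = q * qb q x + 1 := by
  have hne : 1 - q ≠ 0 := sub_ne_zero.mpr hq₁.symm
  rw [qb, qb, Real.rpow_add_one hq₀]
  field_simp
  ring

lemma tendsto_qb (x : ℝ) : Tendsto (fun q ↦ qb q x) (𝓝[≠] 1) (𝓝 x) := by
  have hderiv : HasDerivAt (fun q : ℝ ↦ q ^ x) x 1 := by
    simpa using Real.hasDerivAt_rpow_const (x := 1) (p := x) (Or.inl one_ne_zero)
  refine (hasDerivAt_iff_tendsto_slope.mp hderiv).congr fun q ↦ ?_
  rw [slope_def_field, qb, Real.one_rpow, ← neg_sub 1 q, ← neg_sub 1 (q ^ x), neg_div_neg_eq]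

section QEuler

variable {q : ℝ} (hq₀ : 0 < q) (hq₁ : q < 1)

include hq₀ hq₁

lemma abs_qb_le_of_le {x y : ℝ} (hxy : x ≤ y) : |qb q y| ≤ (1 + q ^ x) / (1 - q) := by
  have hpos : 0 < 1 - q := sub_pos.mpr hq₁
  have hmono : q ^ y ≤ q ^ x := Real.rpow_le_rpow_of_exponent_ge hq₀ hq₁.le hxy
  rw [qb, abs_div, abs_of_pos hpos]
  gcongr
  calc |1 - q ^ y| ≤ |1| + |q ^ y| := abs_sub _ _
    _ = 1 + q ^ y := by rw [abs_one, abs_of_pos (Real.rpow_pos_of_pos hq₀ y)]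
    _ ≤ 1 + q ^ x := by gcongr

lemma summable_qEulerPoly (n : ℕ) (x : ℝ) :
    Summable fun k : ℕ ↦ (-1 : ℝ) ^ k * q ^ k * qb q (k + x) ^ n := by
  refine .of_norm_bounded ((summable_geometric_of_lt_one hq₀.le hq₁).mul_right
    (((1 + q ^ x) / (1 - q)) ^ n)) fun k ↦ ?_
  have hqb : |qb q (k + x)| ≤ (1 + q ^ x) / (1 - q) :=
    abs_qb_le_of_le hq₀ hq₁ (le_add_of_nonneg_left k.cast_nonneg)
  calc ‖(-1 : ℝ) ^ k * q ^ k * qb q (k + x) ^ n‖ = q ^ k * |qb q (k + x)| ^ n := by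
        simp [abs_of_pos hq₀]
    _ ≤ q ^ k * ((1 + q ^ x) / (1 - q)) ^ n := by gcongr

lemma mul_qEulerPoly_add_one_add_qEulerPoly (n : ℕ) (x : ℝ) :
    q * qEulerPoly q n (x + 1) + qEulerPoly q n x = (1 + q) * qb q x ^ n := by
  have htail : ∑' k : ℕ, (-1 : ℝ) ^ (k + 1) * q ^ (k + 1) * qb q ((k + 1 : ℕ) + x) ^ n
      = -q * ∑' k : ℕ, (-1 : ℝ) ^ k * q ^ k * qb q (k + (x + 1)) ^ n := by
    rw [← tsum_mul_left]
    refine tsum_congr fun k ↦ ?_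
    rw [Nat.cast_succ, add_right_comm, add_assoc]
    ring
  rw [qEulerPoly, qEulerPoly, (summable_qEulerPoly hq₀ hq₁ n x).tsum_eq_zero_add, htail]
  simp only [pow_zero, Nat.cast_zero, zero_add, one_mul]
  ring

lemma qEulerPoly_add_one (n : ℕ) (x : ℝ) :
    qEulerPoly q n (x + 1)
      = ∑ j ∈ range (n + 1), (n.choose j : ℝ) * q ^ j * qEulerPoly q j x := by
  have hterm (k : ℕ) : (-1 : ℝ) ^ k * q ^ k * qb q (k + (x + 1)) ^ n
      = ∑ j ∈ range (n + 1),
          (n.choose j : ℝ) * q ^ j * ((-1 : ℝ) ^ k * q ^ k * qb q (k + x) ^ j) := by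
    rw [← add_assoc, qb_add_one hq₀.ne' hq₁.ne, add_pow, mul_sum]
    refine sum_congr rfl fun j _ ↦ ?_
    rw [mul_pow, one_pow]
    ring
  rw [qEulerPoly, tsum_congr hterm,
    Summable.tsum_finsetSum fun j _ ↦ (summable_qEulerPoly hq₀ hq₁ j x).mul_left _, mul_sum]
  refine sum_congr rfl fun j _ ↦ ?_
  rw [tsum_mul_left, qEulerPoly, mul_left_comm]

lemma qEulerPoly_eq_div (n : ℕ) (x : ℝ) :
    qEulerPoly q n x
      = ((1 + q) * qb q x ^ n - q * ∑ j ∈ range n, (n.choose j : ℝ) * q ^ j * qEulerPoly q j x)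
        / (1 + q ^ (n + 1)) := by
  have hadd := qEulerPoly_add_one hq₀ hq₁ n x
  rw [sum_range_succ, Nat.choose_self, Nat.cast_one, one_mul] at hadd
  rw [eq_div_iff (by positivity)]
  linear_combination mul_qEulerPoly_add_one_add_qEulerPoly hq₀ hq₁ n x - q * hadd

end QEuler

theorem q_euler_tendsto_euler_general (n : ℕ) (x : ℝ) :
    Tendsto (fun q ↦ qEulerPoly q n x) (𝓝[Set.Ioo 0 1] 1) (𝓝 (eulerFun n x)) := by
  induction n using Nat.strong_induction_on with
  | _ n ih =>
    have hid : Tendsto (fun q : ℝ ↦ q) (𝓝[Set.Ioo 0 1] 1) (𝓝 1) :=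
      tendsto_id.mono_left nhdsWithin_le_nhds
    have hqb : Tendsto (fun q ↦ qb q x) (𝓝[Set.Ioo 0 1] 1) (𝓝 x) :=
      (tendsto_qb x).mono_left (nhdsWithin_mono 1 fun _ hq ↦ hq.2.ne)
    have hsum : Tendsto (fun q ↦ ∑ j ∈ range n, (n.choose j : ℝ) * q ^ j * qEulerPoly q j x)
        (𝓝[Set.Ioo 0 1] 1) (𝓝 (∑ j ∈ range n, (n.choose j : ℝ) * 1 ^ j * eulerFun j x)) :=
      tendsto_finsetSum _ fun j hj ↦ ((hid.pow j).const_mul _).mul (ih j (mem_range.mp hj))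
    have hquot := (((hid.const_add 1).mul (hqb.pow n)).sub (hid.mul hsum)).div
      ((hid.pow (n + 1)).const_add 1) (by norm_num)
    have hlim : ((1 + 1) * x ^ n - 1 * ∑ j ∈ range n, (n.choose j : ℝ) * 1 ^ j * eulerFun j x)
        / (1 + 1 ^ (n + 1)) = eulerFun n x := by
      simp only [one_pow, mul_one, one_mul, one_add_one_eq_two]
      rw [← two_mul_eulerFun, mul_div_cancel_left₀ _ two_ne_zero]
    rw [hlim] at hquot
    refine hquot.congr' ?_
    filter_upwards [self_mem_nhdsWithin] with q ⟨hq₀, hq₁⟩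
    exact (qEulerPoly_eq_div hq₀ hq₁ n x).symm

theorem q_euler_tendsto_euler (n : ℕ) :
    Filter.Tendsto (fun q : ℝ => qEuler q n) (nhdsWithin 1 (Set.Ioo 0 1))
      (nhds ((2 * (1 - 2 ^ (n + 1)) * bernoulli (n + 1) / (n + 1) : ℚ) : ℝ)) := by
  simpa [qEuler, eulerFun_eval_zero] using q_euler_tendsto_euler_general n 0
end
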